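/- Let a > −1, μ ∈ {0,1}, m ≥ 1, n = 2m + μ, let k ≥ 0 be an integer and s > 0. For an integer j, define A_j = ∫_{ℝ^n} 1[ #{i : |x_i| < s} = j ] · ∏_{i=1}^{n} (1 + x_i²)^{−(n+a+1)/2} · ∏_{1≤i<l≤n} |x_l − x_i| dx and Z₁ = ∫_{ℝ^n} ∏_{i=1}^{n} (1 + x_i²)^{−(n+a+1)/2} · ∏_{1≤i<l≤n} |x_l − x_i| dx, with the convention A_j = 0 for j < 0. Further define B_k = ∫_{(0,∞)^m} 1[ #{i : y_i < s²} = k ] · ∏_{i=1}^{m} y_i^{μ−1/2} (1 + y_i)^{−(n+a)} · ∏_{1≤i<l≤m} (y_l − y_i)² dy and Z₂ = ∫_{(0,∞)^m} ∏_{i=1}^{m} y_i^{μ−1/2} (1 + y_i)^{−(n+a)} · ∏_{1≤i<l≤m} (y_l − y_i)² dy. Then all these integrals are finite, Z₁ > 0, Z₂ > 0, and (A_{2k+μ−1} + A_{2k+μ}) / Z₁ = B_k / Z₂. -/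

import Mathlib

open MeasureTheory

/-- The integrand of the Cauchy OE gap-counting integral `A_j` on `ℝ^n`. -/
noncomputable def coeGapIntegrand (n : ℕ) (a : ℝ) (s : ℝ) (j : ℤ) (x : Fin n → ℝ) : ℝ :=
  if ((Finset.univ.filter fun i => |x i| < s).card : ℤ) = j then
    (∏ i, (1 + (x i) ^ 2) ^ (-(((n : ℝ) + a + 1) / 2))) *
      ∏ k, ∏ l ∈ Finset.Iio k, |x k - x l|
  else 0

/-- The integrand of the Cauchy OE normalization `Z₁`. -/
noncomputable def coeTotalIntegrand (n : ℕ) (a : ℝ) (x : Fin n → ℝ) : ℝ :=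
  (∏ i, (1 + (x i) ^ 2) ^ (-(((n : ℝ) + a + 1) / 2))) *
    ∏ k, ∏ l ∈ Finset.Iio k, |x k - x l|

/-- The integrand of the transformed Cauchy UE gap-counting integral `B_k` on `(0,∞)^m`. -/
noncomputable def cueGapIntegrand (m μ n : ℕ) (a : ℝ) (c : ℝ) (k : ℕ) (y : Fin m → ℝ) : ℝ :=
  if (Finset.univ.filter fun i => y i < c).card = k then
    (∏ i, (y i) ^ ((μ : ℝ) - 1 / 2) * (1 + y i) ^ (-((n : ℝ) + a))) *
      ∏ i, ∏ l ∈ Finset.Iio i, (y i - y l) ^ 2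
  else 0

/-- The integrand of the transformed Cauchy UE normalization `Z₂`. -/
noncomputable def cueTotalIntegrand (m μ n : ℕ) (a : ℝ) (y : Fin m → ℝ) : ℝ :=
  (∏ i, (y i) ^ ((μ : ℝ) - 1 / 2) * (1 + y i) ^ (-((n : ℝ) + a))) *
    ∏ i, ∏ l ∈ Finset.Iio i, (y i - y l) ^ 2

/-!
Fold the orthogonal ensemble onto the chamber `0 < t_0 < ⋯ < t_{n-1}`. Summed over the signs of the
points, the Vandermonde determinant loses its entries with odd index sum, so the density becomes a
product of two determinants: one in the points whose position is congruent to `μ` modulo `2`, and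
one in the remaining points, which lie one in each gap between the former. Integrating the remaining
points over the gaps turns the second determinant into one of tails `∫_t^∞ x^(2j+1-μ) w_p(x) dx`,
where `w_p(x) = (1+x²)^(-p)`. Integration by parts reduces these to the span of the functions
`t^(2j+μ) w_(p-1)(t)`, together with a tail at the endpoint `0` if `μ = 1`, so both determinants are
multiples of `det [y_i^(2j)]`, and `u = y²` yields the density of the unitary ensemble. If `c` of
the points `t_i` lie below `s`, then `⌊(c+1-μ)/2⌋` of the kept ones do, and this is `k` exactly when
`c ∈ {2k+μ-1, 2k+μ}`. The constant of proportionality does not depend on the region of integration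
and cancels.
-/

theorem prod_prod_Iio_sub_eq_det_vandermonde {R : Type*} [CommRing R] {N : ℕ} (v : Fin N → R) :
    ∏ k, ∏ l ∈ Finset.Iio k, (v k - v l) = (Matrix.vandermonde v).det := by
  rw [Matrix.det_vandermonde]
  exact Finset.prod_comm' fun _ _ => by simp

theorem prod_prod_Iio_abs_sub_eq_abs_det_vandermonde {N : ℕ} (v : Fin N → ℝ) :
    ∏ k, ∏ l ∈ Finset.Iio k, |v k - v l| = |(Matrix.vandermonde v).det| := by
  simp only [← prod_prod_Iio_sub_eq_det_vandermonde, Finset.abs_prod]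

theorem prod_prod_Iio_sub_sq_eq_det_vandermonde_sq {N : ℕ} (v : Fin N → ℝ) :
    ∏ k, ∏ l ∈ Finset.Iio k, (v k - v l) ^ 2 = (Matrix.vandermonde v).det ^ 2 := by
  simp only [← prod_prod_Iio_sub_eq_det_vandermonde, Finset.prod_pow]

theorem abs_det_vandermonde_comp_perm {N : ℕ} (v : Fin N → ℝ) (σ : Equiv.Perm (Fin N)) :
    |(Matrix.vandermonde (v ∘ σ)).det| = |(Matrix.vandermonde v).det| :=
  Matrix.abs_det_submatrix_equiv_equiv σ (Equiv.refl _) (Matrix.vandermonde v)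

theorem sum_det_eq_det_sum {ι κ R : Type*} [Fintype ι] [DecidableEq ι] [Fintype κ] [CommRing R]
    (f : ι → κ → ι → R) :
    ∑ ε : ι → κ, (Matrix.of fun i => f i (ε i)).det = (Matrix.of fun i => ∑ u, f i u).det :=
  (Matrix.detRowAlternating.toMultilinearMap.map_sum f).symm

theorem det_eq_of_row_eq_add_succ {R : Type*} [CommRing R] {N : ℕ}
    (A B : Matrix (Fin N) (Fin N) R)
    (h : ∀ (i : Fin N) (j), A i j = B i j + if h : (i : ℕ) + 1 < N then A ⟨i + 1, h⟩ j else 0) :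
    A.det = B.det := by
  cases N with
  | zero => simp
  | succ N =>
    rw [← Matrix.det_submatrix_equiv_self Fin.revPerm A,
      ← Matrix.det_submatrix_equiv_self Fin.revPerm B]
    refine Matrix.det_eq_of_forall_row_eq_smul_add_pred (fun _ => 1) (fun j => ?_) fun i j => ?_
    · simpa using h (Fin.last N) (Fin.rev j)
    · have hi : ((Fin.rev i.succ : Fin (N + 1)) : ℕ) + 1 < N + 1 := by
        simp only [Fin.rev_succ, Fin.val_castSucc]; omega
      have hrev : (⟨(Fin.rev i.succ : Fin (N + 1)) + 1, hi⟩ : Fin (N + 1)) =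
          Fin.rev i.castSucc := by
        ext
        simp only [Fin.rev_succ, Fin.val_castSucc, Fin.rev_castSucc, Fin.val_succ]
      rw [Matrix.submatrix_apply, Matrix.submatrix_apply, Fin.revPerm_apply, Fin.revPerm_apply,
        h, dif_pos hi, hrev, one_mul]
      rfl

/-- The splitting of `{0, …, 2m+μ-1}` into the indices congruent to `μ + 1` modulo `2`, listed by
the left summand, and those congruent to `μ`, listed by the right summand. For a configuration
of `2m+μ` points in increasing order the former are integrated out and the latter are kept. -/
noncomputable def paritySplit (m : ℕ) {μ : ℕ} (hμ : μ ≤ 1) :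
    Fin (m + μ) ⊕ Fin m ≃ Fin (2 * m + μ) :=
  Equiv.ofBijective
    (Sum.elim (fun i => ⟨2 * i + 1 - μ, by omega⟩) fun i => ⟨2 * i + μ, by omega⟩) <| by
    rw [Fintype.bijective_iff_injective_and_card]
    refine ⟨?_, by simp only [Fintype.card_sum, Fintype.card_fin]; omega⟩
    rintro (i | i) (j | j) h <;>
      simp only [Sum.elim_inl, Sum.elim_inr, Sum.inl.injEq, Sum.inr.injEq,
        reduceCtorEq, Fin.ext_iff] at h ⊢ <;> omega

section ParitySplit

variable {m μ : ℕ} (hμ : μ ≤ 1)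

theorem val_paritySplit_inl (i : Fin (m + μ)) :
    (paritySplit m hμ (Sum.inl i) : ℕ) = 2 * i + 1 - μ := rfl

theorem val_paritySplit_inr (i : Fin m) : (paritySplit m hμ (Sum.inr i) : ℕ) = 2 * i + μ := rfl

theorem det_eq_mul_of_checkerboard {R : Type*} [CommRing R]
    (A : Matrix (Fin (2 * m + μ)) (Fin (2 * m + μ)) R)
    (hA : ∀ i j : Fin (2 * m + μ), Odd (i + j : ℕ) → A i j = 0) :
    A.det = (A.submatrix (paritySplit m hμ ∘ Sum.inl) (paritySplit m hμ ∘ Sum.inl)).det *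
      (A.submatrix (paritySplit m hμ ∘ Sum.inr) (paritySplit m hμ ∘ Sum.inr)).det := by
  rw [← Matrix.det_submatrix_equiv_self (paritySplit m hμ), ← Matrix.det_fromBlocks_zero₂₁ _ 0]
  congr 1
  ext (i | i) (j | j)
  · rfl
  · refine hA _ _ ?_
    rw [val_paritySplit_inl, val_paritySplit_inr, Nat.odd_iff]
    omega
  · refine hA _ _ ?_
    rw [val_paritySplit_inl, val_paritySplit_inr, Nat.odd_iff]
    omega
  · rfl

end ParitySplit

/-- The determinant `det [φ_j(x_i)]` of functions `φ` evaluated at points `x`. -/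
noncomputable def alternant {α : Type*} {N : ℕ} (φ : Fin N → α → ℝ) (x : Fin N → α) : ℝ :=
  (Matrix.of fun i j => φ j (x i)).det

theorem exists_alternant_eq_mul_of_mem_span {α : Type*} {N : ℕ} {φ ψ : Fin N → α → ℝ}
    (h : ∀ j, ψ j ∈ Submodule.span ℝ (Set.range φ)) :
    ∃ C : ℝ, ∀ x, alternant ψ x = C * alternant φ x := by
  choose c hc using fun j => (Submodule.mem_span_range_iff_exists_fun ℝ).1 (h j)
  refine ⟨(Matrix.of fun k j => c j k).det, fun x => ?_⟩
  rw [alternant, alternant, mul_comm, ← Matrix.det_mul]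
  congr 1
  ext i j
  simp only [Matrix.of_apply, Matrix.mul_apply, ← hc j, Finset.sum_apply, Pi.smul_apply,
    smul_eq_mul, mul_comm]

theorem alternant_cons_of_eq_zero {α : Type*} {N : ℕ} {φ : Fin N → α → ℝ} {x₀ : α}
    (h : ∀ j, φ j x₀ = 0) (f : α → ℝ) (x : Fin N → α) :
    alternant (Fin.cons f φ : Fin (N + 1) → α → ℝ) (Fin.cons x₀ x) = f x₀ * alternant φ x := by
  rw [alternant, Matrix.det_succ_row_zero, Fin.sum_univ_succ]
  simp [h, alternant, Matrix.submatrix]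

theorem alternant_pow_mul {α : Type*} {N : ℕ} (f w : α → ℝ) (x : Fin N → α) :
    alternant (fun j x => f x ^ (j : ℕ) * w x) x =
      (∏ i, w (x i)) * (Matrix.vandermonde fun i => f (x i)).det := by
  rw [← Matrix.det_mul_column]
  exact congrArg Matrix.det (Matrix.ext fun i j => mul_comm _ _)

/-- The unnormalized eigenvalue density `∏ w(x_i) ∏_{i<l} |x_l - x_i|` of the orthogonal ensemble
with weight `w`. -/
noncomputable def oeDensity {N : ℕ} (w : ℝ → ℝ) (x : Fin N → ℝ) : ℝ :=
  (∏ i, w (x i)) * |(Matrix.vandermonde x).det|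

/-- The unnormalized eigenvalue density `∏ w(x_i) ∏_{i<l} (x_l - x_i)²` of the unitary ensemble
with weight `w`. -/
noncomputable def ueDensity {N : ℕ} (w : ℝ → ℝ) (x : Fin N → ℝ) : ℝ :=
  (∏ i, w (x i)) * (Matrix.vandermonde x).det ^ 2

theorem oeDensity_comp_perm {N : ℕ} (w : ℝ → ℝ) (x : Fin N → ℝ) (σ : Equiv.Perm (Fin N)) :
    oeDensity w (x ∘ σ) = oeDensity w x := by
  rw [oeDensity, abs_det_vandermonde_comp_perm]
  exact congrArg (· * _) (Equiv.prod_comp σ fun i => w (x i))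

theorem ueDensity_comp_perm {N : ℕ} (w : ℝ → ℝ) (x : Fin N → ℝ) (σ : Equiv.Perm (Fin N)) :
    ueDensity w (x ∘ σ) = ueDensity w x := by
  rw [ueDensity, ← sq_abs, abs_det_vandermonde_comp_perm, sq_abs]
  exact congrArg (· * _) (Equiv.prod_comp σ fun i => w (x i))

/-- The open Weyl chamber `0 < t_0 < t_1 < ⋯ < t_{N-1}` of type `B_N`, a fundamental domain for the
group of signed permutations. -/
def chamber (N : ℕ) : Set (Fin N → ℝ) := {t | (∀ i, 0 < t i) ∧ StrictMono t}

section SignSum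

variable {N : ℕ} {t : Fin N → ℝ}

theorem abs_units_smul_sub_units_smul {x y : ℝ} (hx : 0 < x) (hxy : x < y) (u v : ℤˣ) :
    |u • y - v • x| = (u : ℤ) * (u • y - v • x) := by
  rcases Int.units_eq_one_or u with rfl | rfl <;> rcases Int.units_eq_one_or v with rfl | rfl <;>
    simp only [Units.neg_smul, one_smul, Units.val_neg, Units.val_one, Int.cast_neg, Int.cast_one,
      neg_mul, one_mul]
  · exact abs_of_pos (by linarith)
  · exact abs_of_pos (by linarith)
  · exact abs_of_neg (by linarith)
  · exact abs_of_neg (by linarith)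

theorem abs_det_vandermonde_units_smul (ht : t ∈ chamber N) (ε : Fin N → ℤˣ) :
    |(Matrix.vandermonde fun i => ε i • t i).det| =
      (∏ i, ((ε i : ℤ) : ℝ) ^ (i : ℕ)) * (Matrix.vandermonde fun i => ε i • t i).det := by
  rw [← prod_prod_Iio_abs_sub_eq_abs_det_vandermonde, ← prod_prod_Iio_sub_eq_det_vandermonde,
    ← Finset.prod_mul_distrib]
  refine Finset.prod_congr rfl fun k _ => ?_
  rw [Finset.prod_congr rfl fun l hl =>
    abs_units_smul_sub_units_smul (ht.1 l) (ht.2 (Finset.mem_Iio.1 hl)) (ε k) (ε l)]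
  rw [Finset.prod_mul_distrib, Finset.prod_const, Fin.card_Iio]

theorem oeDensity_units_smul {w : ℝ → ℝ} (hw : w.Even) (ht : t ∈ chamber N) (ε : Fin N → ℤˣ) :
    oeDensity w (fun i => ε i • t i) =
      (Matrix.of fun i j : Fin N =>
        ((ε i : ℤ) : ℝ) ^ (i + j : ℕ) * (t i ^ (j : ℕ) * w (t i))).det := by
  have hwε : ∀ i, w (ε i • t i) = w (t i) := fun i => by
    rcases Int.units_eq_one_or (ε i) with h | h <;> simp [h, Units.neg_smul, hw (t i)]
  rw [oeDensity, abs_det_vandermonde_units_smul ht, ← mul_assoc, ← Finset.prod_mul_distrib,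
    ← Matrix.det_mul_column]
  refine congrArg Matrix.det (Matrix.ext fun i j => ?_)
  rw [Matrix.of_apply, Matrix.of_apply, Matrix.vandermonde_apply, hwε, Units.smul_def,
    zsmul_eq_mul]
  ring

theorem sum_units_pow (d : ℕ) : ∑ u : ℤˣ, ((u : ℤ) : ℝ) ^ d = if Odd d then 0 else 2 := by
  rw [show (Finset.univ : Finset ℤˣ) = {1, -1} from rfl, Finset.sum_pair (by decide)]
  split_ifs with h
  · simp [h.neg_one_pow]
  · norm_num [(Nat.not_odd_iff_even.1 h).neg_one_pow]

-- The sum over the signs is taken row by row, which kills the entries of the Vandermonde matrix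
-- with odd index sum and leaves two independent blocks.
theorem sum_oeDensity_units_smul {m μ : ℕ} (hμ : μ ≤ 1) {w : ℝ → ℝ} (hw : w.Even)
    {t : Fin (2 * m + μ) → ℝ} (ht : t ∈ chamber (2 * m + μ)) :
    ∑ ε : Fin (2 * m + μ) → ℤˣ, oeDensity w (fun i => ε i • t i) =
      2 ^ (2 * m + μ) *
        (alternant (fun (j : Fin (m + μ)) x => x ^ (2 * j + 1 - μ : ℕ) * w x)
            (t ∘ paritySplit m hμ ∘ Sum.inl) *
          alternant (fun (j : Fin m) x => x ^ (2 * j + μ : ℕ) * w x)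
            (t ∘ paritySplit m hμ ∘ Sum.inr)) := by
  let A : Matrix (Fin (2 * m + μ)) (Fin (2 * m + μ)) ℝ :=
    Matrix.of fun i j => if Odd (i + j : ℕ) then 0 else t i ^ (j : ℕ) * w (t i)
  have hsum : (Matrix.of fun i : Fin (2 * m + μ) => ∑ u : ℤˣ, fun j : Fin (2 * m + μ) =>
      ((u : ℤ) : ℝ) ^ (i + j : ℕ) * (t i ^ (j : ℕ) * w (t i))) = (2 : ℝ) • A := by
    ext i j
    rw [Matrix.of_apply, Finset.sum_apply, ← Finset.sum_mul, sum_units_pow]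
    change _ = (2 : ℝ) * if Odd (i + j : ℕ) then 0 else t i ^ (j : ℕ) * w (t i)
    split_ifs <;> simp
  have hentry : ∀ i j : Fin (2 * m + μ), ¬ Odd (i + j : ℕ) → A i j = t i ^ (j : ℕ) * w (t i) :=
    fun i j h => if_neg h
  calc ∑ ε : Fin (2 * m + μ) → ℤˣ, oeDensity w (fun i => ε i • t i)
      = ((2 : ℝ) • A).det := by
        rw [← hsum, ← sum_det_eq_det_sum]
        exact Finset.sum_congr rfl fun ε _ => oeDensity_units_smul hw ht ε
    _ = 2 ^ (2 * m + μ) * A.det := by rw [Matrix.det_smul, Fintype.card_fin]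
    _ = _ := by
        rw [det_eq_mul_of_checkerboard hμ A fun i j h => if_pos h]
        congr 2 <;> refine congrArg Matrix.det (Matrix.ext fun i j => ?_)
        · refine (hentry _ _ ?_).trans ?_
          · simp only [Function.comp_apply, val_paritySplit_inl, Nat.odd_iff]; omega
          · rfl
        · refine (hentry _ _ ?_).trans ?_
          · simp only [Function.comp_apply, val_paritySplit_inr, Nat.odd_iff]; omega
          · rfl

end SignSum

section SignedPermutations

variable {N : ℕ}

theorem units_smul_eq_abs_of_pos {u : ℤˣ} {x : ℝ} (h : 0 < u • x) : u • x = |x| := by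
  rcases Int.units_eq_one_or u with rfl | rfl
  · rw [one_smul] at h ⊢
    exact (abs_of_pos h).symm
  · rw [Units.neg_smul, one_smul] at h ⊢
    exact (abs_of_neg (neg_pos.1 h)).symm

theorem exists_units_smul_eq_abs (x : ℝ) : ∃ u : ℤˣ, u • x = |x| := by
  rcases abs_choice x with h | h
  · exact ⟨1, by rw [h, one_smul]⟩
  · exact ⟨-1, by rw [h, Units.neg_smul, one_smul]⟩

theorem units_eq_of_smul_pos {u v : ℤˣ} {x : ℝ} (hu : 0 < u • x) (hv : 0 < v • x) : u = v := by
  have hx : x ≠ 0 := by rintro rfl; simp at hu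
  have huv : ((u : ℤ) : ℝ) * x = (v : ℤ) * x := by
    simpa only [Units.smul_def, zsmul_eq_mul] using
      (units_smul_eq_abs_of_pos hu).trans (units_smul_eq_abs_of_pos hv).symm
  exact Units.ext (Int.cast_injective (mul_right_cancel₀ hx huv))

theorem measurePreserving_units_smul (u : ℤˣ) :
    MeasurePreserving (fun x : ℝ => u • x) volume volume := by
  rcases Int.units_eq_one_or u with rfl | rfl
  · simp only [one_smul]
    exact MeasurePreserving.id volume
  · simpa only [Units.neg_smul, one_smul] using Measure.measurePreserving_neg volume

/-- The action `x ↦ (ε_i x_{σ i})_i` of a signed permutation on `ℝ^N`. -/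
noncomputable def signedPerm (ε : Fin N → ℤˣ) (σ : Equiv.Perm (Fin N)) :
    (Fin N → ℝ) ≃ᵐ (Fin N → ℝ) :=
  (MeasurableEquiv.arrowCongr' σ.symm (MeasurableEquiv.refl ℝ)).trans
    (MeasurableEquiv.piCongrRight fun i => MeasurableEquiv.smul (ε i))

theorem signedPerm_apply (ε : Fin N → ℤˣ) (σ : Equiv.Perm (Fin N)) (x : Fin N → ℝ) (i : Fin N) :
    signedPerm ε σ x i = ε i • x (σ i) := rfl

theorem measurePreserving_signedPerm (ε : Fin N → ℤˣ) (σ : Equiv.Perm (Fin N)) :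
    MeasurePreserving (signedPerm ε σ) volume volume :=
  (volume_preserving_pi fun i => measurePreserving_units_smul (ε i)).comp
    (volume_preserving_arrowCongr' σ.symm (MeasurableEquiv.refl ℝ) (MeasurePreserving.id _))

theorem measurableSet_chamber : MeasurableSet (chamber N) := by
  have : chamber N = {t | ∀ i, 0 < t i} ∩ {t | ∀ i j, i < j → t i < t j} := rfl
  rw [this]
  measurability

theorem signedPerm_mem_chamber_iff {ε : Fin N → ℤˣ} {σ : Equiv.Perm (Fin N)} {x : Fin N → ℝ} :
    signedPerm ε σ x ∈ chamber N ↔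
      (∀ i, 0 < ε i • x (σ i)) ∧ StrictMono fun i => |x (σ i)| := by
  refine and_congr_right fun hpos => iff_of_eq (congrArg StrictMono (funext fun i => ?_))
  exact units_smul_eq_abs_of_pos (hpos i)

theorem pairwise_disjoint_signedPerm_preimage_chamber :
    Pairwise (Function.onFun Disjoint fun p : (Fin N → ℤˣ) × Equiv.Perm (Fin N) =>
      signedPerm p.1 p.2 ⁻¹' chamber N) := by
  rintro ⟨ε, σ⟩ ⟨η, τ⟩ hne
  refine Set.disjoint_left.2 fun x hσ hτ => hne ?_
  obtain ⟨hεpos, hσ⟩ := signedPerm_mem_chamber_iff.1 hσ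
  obtain ⟨hηpos, hτ⟩ := signedPerm_mem_chamber_iff.1 hτ
  have hsort := Tuple.unique_monotone (f := fun i => |x i|) hσ.monotone hτ.monotone
  have hinj : Function.Injective fun i => |x i| := by
    simpa [Function.comp_def] using hσ.injective.comp σ.symm.injective
  obtain rfl : σ = τ := Equiv.ext fun i => hinj (congrFun hsort i)
  exact Prod.ext (funext fun i => units_eq_of_smul_pos (hεpos i) (hηpos i)) rfl

theorem ae_linearMap_ne_zero {E : Type*} [NormedAddCommGroup E] [NormedSpace ℝ E]
    [FiniteDimensional ℝ E] [MeasurableSpace E] [BorelSpace E] (ν : Measure E)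
    [ν.IsAddHaarMeasure] {f : E →ₗ[ℝ] ℝ} (hf : f ≠ 0) : ∀ᵐ x ∂ν, f x ≠ 0 := by
  simp only [ae_iff, not_not]
  exact Measure.addHaar_submodule ν (LinearMap.ker f) (mt LinearMap.ker_eq_top.1 hf)

theorem ae_abs_injective_and_ne_zero :
    ∀ᵐ x : Fin N → ℝ, Function.Injective (fun i => |x i|) ∧ ∀ i, x i ≠ 0 := by
  let coord (i : Fin N) : (Fin N → ℝ) →ₗ[ℝ] ℝ := LinearMap.proj i
  have hzero : ∀ i, ∀ᵐ x : Fin N → ℝ, x i ≠ 0 := fun i =>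
    ae_linearMap_ne_zero volume (f := coord i) fun h => by
      simpa [coord] using LinearMap.congr_fun h (Pi.single i 1)
  have hsub : ∀ i j, i ≠ j → ∀ᵐ x : Fin N → ℝ, x i - x j ≠ 0 := fun i j hij =>
    ae_linearMap_ne_zero volume (f := coord i - coord j) fun h => by
      simpa [coord, hij] using LinearMap.congr_fun h (Pi.single i 1)
  have hadd : ∀ i j, i ≠ j → ∀ᵐ x : Fin N → ℝ, x i + x j ≠ 0 := fun i j hij =>
    ae_linearMap_ne_zero volume (f := coord i + coord j) fun h => by
      simpa [coord, hij] using LinearMap.congr_fun h (Pi.single i 1)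
  simp only [← ae_all_iff] at hzero hsub hadd
  filter_upwards [hzero, hsub, hadd] with x hzero hsub hadd
  refine ⟨fun i j hij => ?_, hzero⟩
  by_contra hne
  rcases abs_eq_abs.1 hij with h | h
  · exact hsub i j hne (sub_eq_zero.2 h)
  · exact hadd i j hne (eq_neg_iff_add_eq_zero.1 h)

theorem ae_mem_iUnion_signedPerm_preimage_chamber :
    ∀ᵐ x : Fin N → ℝ, x ∈ ⋃ p : (Fin N → ℤˣ) × Equiv.Perm (Fin N),
      signedPerm p.1 p.2 ⁻¹' chamber N := by
  filter_upwards [ae_abs_injective_and_ne_zero] with x ⟨hinj, hne⟩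
  let σ := Tuple.sort fun i => |x i|
  choose ε hε using fun i => exists_units_smul_eq_abs (x (σ i))
  refine Set.mem_iUnion.2 ⟨(ε, σ), signedPerm_mem_chamber_iff.2 ⟨fun i => ?_, ?_⟩⟩
  · rw [hε]
    exact abs_pos.2 (hne _)
  · exact (Tuple.monotone_sort _).strictMono_of_injective (hinj.comp σ.injective)

theorem integral_eq_factorial_mul_setIntegral_chamber {F : (Fin N → ℝ) → ℝ} (hF : Integrable F)
    (hsymm : ∀ (σ : Equiv.Perm (Fin N)) x, F (x ∘ σ) = F x) :
    ∫ x, F x = N.factorial * ∫ t in chamber N, ∑ ε : Fin N → ℤˣ, F (fun i => ε i • t i) := by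
  have hcomp : ∀ (ε : Fin N → ℤˣ) (σ : Equiv.Perm (Fin N)) x,
      F (fun i => ε i • signedPerm ε σ x i) = F x := fun ε σ x => by
    rw [← hsymm σ x]
    refine congrArg F (funext fun i => ?_)
    rw [signedPerm_apply, smul_smul, Int.units_mul_self, one_smul, Function.comp_apply]
  have hpiece : ∀ p : (Fin N → ℤˣ) × Equiv.Perm (Fin N),
      ∫ x in signedPerm p.1 p.2 ⁻¹' chamber N, F x = ∫ t in chamber N, F (fun i => p.1 i • t i) :=
    fun p => by
      simpa only [hcomp] using (measurePreserving_signedPerm p.1 p.2).setIntegral_preimage_emb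
        (signedPerm p.1 p.2).measurableEmbedding (fun t => F fun i => p.1 i • t i) (chamber N)
  have hint : ∀ ε : Fin N → ℤˣ, Integrable fun t : Fin N → ℝ => F fun i => ε i • t i := fun ε =>
    (measurePreserving_signedPerm ε 1).integrable_comp_of_integrable hF
  have hmeas : ∀ p : (Fin N → ℤˣ) × Equiv.Perm (Fin N),
      MeasurableSet (signedPerm p.1 p.2 ⁻¹' chamber N) := fun p =>
    measurableSet_preimage (signedPerm p.1 p.2).measurable measurableSet_chamber
  calc ∫ x, F x
      = ∫ x in ⋃ p : (Fin N → ℤˣ) × Equiv.Perm (Fin N), signedPerm p.1 p.2 ⁻¹' chamber N, F x := by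
        rw [Measure.restrict_eq_self_of_ae_mem ae_mem_iUnion_signedPerm_preimage_chamber]
    _ = ∑ p : (Fin N → ℤˣ) × Equiv.Perm (Fin N), ∫ t in chamber N, F (fun i => p.1 i • t i) := by
        rw [integral_iUnion_fintype hmeas pairwise_disjoint_signedPerm_preimage_chamber
          fun _ => hF.integrableOn]
        exact Finset.sum_congr rfl fun p _ => hpiece p
    _ = _ := by
        simp_rw [Fintype.sum_prod_type, Finset.sum_const, Finset.card_univ, Fintype.card_perm,
          Fintype.card_fin, nsmul_eq_mul, ← Finset.mul_sum]
        rw [integral_finsetSum _ fun ε _ => (hint ε).integrableOn]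

/-- The positive orthant of `ℝ^N`. -/
def orthant (N : ℕ) : Set (Fin N → ℝ) := {x | ∀ i, 0 < x i}

theorem measurableSet_orthant : MeasurableSet (orthant N) := by
  unfold orthant
  measurability

theorem setIntegral_orthant_eq_factorial_mul_setIntegral_chamber {G : (Fin N → ℝ) → ℝ}
    (hG : IntegrableOn G (orthant N)) (hsymm : ∀ (σ : Equiv.Perm (Fin N)) x, G (x ∘ σ) = G x) :
    ∫ x in orthant N, G x = N.factorial * ∫ t in chamber N, G t := by
  have hmem : ∀ (σ : Equiv.Perm (Fin N)) x, x ∘ σ ∈ orthant N ↔ x ∈ orthant N := fun σ x =>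
    σ.forall_congr_left.trans (by simp [orthant])
  rw [← integral_indicator measurableSet_orthant,
    integral_eq_factorial_mul_setIntegral_chamber (hG.integrable_indicator measurableSet_orthant)
      fun σ x => by
        classical
        rw [Set.indicator_apply, Set.indicator_apply, hsymm]
        exact if_congr (hmem σ x) rfl rfl]
  congr 1
  refine setIntegral_congr_fun measurableSet_chamber fun t ht => ?_
  refine (Finset.sum_eq_single 1 ?_ ?_).trans ?_
  · refine fun ε _ hε => Set.indicator_of_notMem (fun hmem => hε (funext fun i => ?_)) G
    exact units_eq_of_smul_pos (hmem i) (by simpa using ht.1 i)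
  · simp
  · simp only [Pi.one_apply, one_smul]
    exact Set.indicator_of_mem (show t ∈ orthant N from ht.1) G

end SignedPermutations

section IntegralAlternant

variable {α : Type*} {N : ℕ}

theorem alternant_eq_sum (φ : Fin N → α → ℝ) (x : Fin N → α) :
    alternant φ x =
      ∑ σ : Equiv.Perm (Fin N), ((Equiv.Perm.sign σ : ℤ) : ℝ) * ∏ i, φ (σ i) (x i) := by
  rw [alternant, ← Matrix.det_transpose, Matrix.det_apply']
  rfl

variable [MeasurableSpace α]

theorem integrable_alternant {φ : Fin N → α → ℝ} {ν : Fin N → Measure α}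
    [∀ i, SigmaFinite (ν i)] (hφ : ∀ i j, Integrable (φ j) (ν i)) :
    Integrable (alternant φ) (Measure.pi ν) := by
  simp only [funext (alternant_eq_sum φ)]
  exact integrable_finsetSum _ fun σ _ => (Integrable.fintype_prod fun i => hφ i (σ i)).const_mul _

theorem integral_alternant {φ : Fin N → α → ℝ} {ν : Fin N → Measure α}
    [∀ i, SigmaFinite (ν i)] (hφ : ∀ i j, Integrable (φ j) (ν i)) :
    ∫ x, alternant φ x ∂Measure.pi ν = (Matrix.of fun i j => ∫ x, φ j x ∂ν i).det := by
  simp_rw [alternant_eq_sum]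
  rw [integral_finsetSum _ fun σ _ => (Integrable.fintype_prod fun i => hφ i (σ i)).const_mul _,
    ← Matrix.det_transpose, Matrix.det_apply']
  refine Finset.sum_congr rfl fun σ _ => ?_
  rw [integral_const_mul, integral_fintype_prod_eq_prod fun i => φ (σ i)]
  rfl

theorem integrable_alternant_mul_alternant {φ ψ : Fin N → α → ℝ} {ν : Measure α} [SigmaFinite ν]
    (h : ∀ i j, Integrable (fun x => φ i x * ψ j x) ν) :
    Integrable (fun x => alternant φ x * alternant ψ x) (Measure.pi fun _ => ν) := by
  have hterm : ∀ (σ τ : Equiv.Perm (Fin N)) (x : Fin N → α),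
      (((Equiv.Perm.sign σ : ℤ) : ℝ) * ∏ i, φ (σ i) (x i)) *
          (((Equiv.Perm.sign τ : ℤ) : ℝ) * ∏ i, ψ (τ i) (x i)) =
        ((Equiv.Perm.sign σ : ℤ) : ℝ) * ((Equiv.Perm.sign τ : ℤ) : ℝ) *
          ∏ i, φ (σ i) (x i) * ψ (τ i) (x i) := fun σ τ x => by
    rw [Finset.prod_mul_distrib, mul_mul_mul_comm]
  simp_rw [alternant_eq_sum, Finset.sum_mul_sum, hterm]
  exact integrable_finsetSum _ fun σ _ => integrable_finsetSum _ fun τ _ =>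
    (Integrable.fintype_prod fun i => h (σ i) (τ i)).const_mul _

end IntegralAlternant

/-- The open interval from `L i` to the next entry of `L`, or to `∞` if `L i` is the last entry:
the range of the `i`-th of several points that alternate with the entries of `L`. -/
def gap {N : ℕ} (L : Fin N → ℝ) (i : Fin N) : Set ℝ :=
  {x | L i < x ∧ ∀ h : (i : ℕ) + 1 < N, x < L ⟨i + 1, h⟩}

-- Adding to each row of `∫ φ_j` over the gaps all the later rows turns the gaps into half-lines.
theorem setIntegral_pi_gap_alternant {N : ℕ} {φ : Fin N → ℝ → ℝ} (hφ : ∀ j, Integrable (φ j))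
    {L : Fin N → ℝ} (hL : Monotone L) :
    ∫ z in Set.univ.pi (gap L), alternant φ z =
      alternant (fun j t => ∫ x in Set.Ioi t, φ j x) L := by
  rw [volume_pi, Measure.restrict_pi_pi, integral_alternant fun i j => (hφ j).integrableOn]
  refine (det_eq_of_row_eq_add_succ _ _ fun i j => ?_).symm
  simp only [Matrix.of_apply]
  split_ifs with h
  · have hle : L i ≤ L ⟨i + 1, h⟩ := hL (Fin.le_def.2 (Nat.le_succ _))
    have hgap : gap L i = Set.Ioo (L i) (L ⟨i + 1, h⟩) := by
      ext x
      simp [gap, h]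
    rw [hgap, ← integral_Ioc_eq_integral_Ioo, ← setIntegral_union (Set.Ioc_disjoint_Ioi le_rfl)
      measurableSet_Ioi (hφ j).integrableOn (hφ j).integrableOn, Set.Ioc_union_Ioi_eq_Ioi hle]
  · have hgap : gap L i = Set.Ioi (L i) := by
      ext x
      simp [gap, h]
    rw [hgap, add_zero]

section Ensembles

variable {N : ℕ} {w : ℝ → ℝ}

theorem oeDensity_nonneg (hw : ∀ x, 0 ≤ w x) (x : Fin N → ℝ) : 0 ≤ oeDensity w x :=
  mul_nonneg (Finset.prod_nonneg fun _ _ => hw _) (abs_nonneg _)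

theorem integrable_oeDensity (hw : ∀ x, 0 ≤ w x)
    (hint : ∀ e < N, Integrable fun x => x ^ e * w x) :
    Integrable (oeDensity w : (Fin N → ℝ) → ℝ) := by
  have habs : (oeDensity w : (Fin N → ℝ) → ℝ) =
      fun x => |alternant (fun j x => x ^ (j : ℕ) * w x) x| := funext fun x => by
    rw [alternant_pow_mul (fun x => x), abs_mul,
      abs_of_nonneg (Finset.prod_nonneg fun i _ => hw (x i)), oeDensity]
  rw [habs]
  exact (integrable_alternant fun _ j => hint j j.2).abs

theorem integral_oeDensity_pos (hpos : ∀ x, 0 < w x) (hcont : Continuous w)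
    (hint : Integrable (oeDensity w : (Fin N → ℝ) → ℝ)) :
    0 < ∫ x : Fin N → ℝ, oeDensity w x := by
  have hcontinuous : Continuous (oeDensity w : (Fin N → ℝ) → ℝ) := by
    unfold oeDensity
    simp only [Matrix.det_vandermonde]
    fun_prop
  refine integral_pos_of_integrable_nonneg_nonzero (x := fun i => (i : ℝ)) hcontinuous hint
    (oeDensity_nonneg fun x => (hpos x).le) ?_
  refine mul_ne_zero (Finset.prod_pos fun i _ => hpos _).ne' (abs_ne_zero.2 ?_)
  exact Matrix.det_vandermonde_ne_zero_iff.2 fun i j h => Fin.ext (Nat.cast_injective h)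

theorem setIntegral_ueDensity_nonneg (hw : ∀ x, 0 < x → 0 ≤ w x) :
    0 ≤ ∫ x in orthant N, ueDensity w x :=
  setIntegral_nonneg measurableSet_orthant fun x hx =>
    mul_nonneg (Finset.prod_nonneg fun i _ => hw (x i) (hx i)) (sq_nonneg _)

theorem orthant_eq_pi : orthant N = Set.univ.pi fun _ => Set.Ioi 0 := by
  ext
  simp [orthant]

theorem integrableOn_ueDensity
    (hint : ∀ e, e + 2 ≤ 2 * N → IntegrableOn (fun x => x ^ e * w x) (Set.Ioi 0)) :
    IntegrableOn (ueDensity w : (Fin N → ℝ) → ℝ) (orthant N) := by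
  have hprod : (ueDensity w : (Fin N → ℝ) → ℝ) = fun x =>
      alternant (fun j x => x ^ (j : ℕ) * w x) x * alternant (fun j x => x ^ (j : ℕ) * 1) x :=
    funext fun x => by
      rw [alternant_pow_mul (fun x => x), alternant_pow_mul (fun x => x) fun _ => 1,
        Finset.prod_const_one, one_mul, ueDensity]
      ring
  rw [hprod, IntegrableOn, orthant_eq_pi, volume_pi, Measure.restrict_pi_pi]
  refine integrable_alternant_mul_alternant fun i j => ?_
  refine (hint (i + j) (by omega)).congr (Filter.Eventually.of_forall fun x => ?_)
  change x ^ (i + j : ℕ) * w x = x ^ (i : ℕ) * w x * (x ^ (j : ℕ) * 1)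
  ring

end Ensembles

theorem strictMono_of_lt_next {α : Type*} [Preorder α] {N : ℕ} {t : Fin N → α}
    (h : ∀ (k : ℕ) (hk : k + 1 < N), t ⟨k, by omega⟩ < t ⟨k + 1, hk⟩) : StrictMono t := by
  cases N with
  | zero => exact fun i => i.elim0
  | succ N => exact Fin.strictMono_iff_lt_succ.2 fun i => h i (Nat.succ_lt_succ i.2)

/-- The sequence `y`, preceded by `0` if `μ = 1`: the lower endpoints of the gaps that contain the
integrated points when `y` are the kept points. -/
noncomputable def lowerEndpoints {m : ℕ} (μ : ℕ) (y : Fin m → ℝ) (i : Fin (m + μ)) : ℝ :=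
  if h : μ ≤ i then y ⟨i - μ, by omega⟩ else 0

section Interlacing

variable {m μ : ℕ}

theorem lowerEndpoints_of_le {y : Fin m → ℝ} {i : Fin (m + μ)} (h : μ ≤ i) :
    lowerEndpoints μ y i = y ⟨i - μ, by omega⟩ := dif_pos h

theorem lowerEndpoints_of_lt {y : Fin m → ℝ} {i : Fin (m + μ)} (h : (i : ℕ) < μ) :
    lowerEndpoints μ y i = 0 := dif_neg h.not_ge

theorem lowerEndpoints_zero (y : Fin m → ℝ) : lowerEndpoints 0 y = y :=
  funext fun _ => lowerEndpoints_of_le (Nat.zero_le _)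

theorem lowerEndpoints_one (y : Fin m → ℝ) : lowerEndpoints 1 y = Fin.cons 0 y := by
  refine funext fun i => Fin.cases ?_ (fun i => ?_) i
  · exact lowerEndpoints_of_lt Nat.zero_lt_one
  · exact lowerEndpoints_of_le (Nat.le_add_left 1 i)

theorem lowerEndpoints_nonneg {y : Fin m → ℝ} (hy : ∀ i, 0 < y i) (i : Fin (m + μ)) :
    0 ≤ lowerEndpoints μ y i := by
  rcases le_or_gt μ i with h | h
  · exact (hy _).le.trans_eq (lowerEndpoints_of_le h).symm
  · exact (lowerEndpoints_of_lt h).ge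

theorem monotone_lowerEndpoints {y : Fin m → ℝ} (hy : y ∈ chamber m) :
    Monotone (lowerEndpoints μ y) := by
  intro i j hij
  rcases le_or_gt μ i with hi | hi
  · rw [lowerEndpoints_of_le hi, lowerEndpoints_of_le (hi.trans hij)]
    exact hy.2.monotone (Fin.le_def.2 (Nat.sub_le_sub_right hij μ))
  · rw [lowerEndpoints_of_lt hi]
    exact lowerEndpoints_nonneg hy.1 j

variable (hμ : μ ≤ 1) {t : Fin (2 * m + μ) → ℝ}

theorem interlace_of_mem_chamber (ht : t ∈ chamber (2 * m + μ)) :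
    t ∘ paritySplit m hμ ∘ Sum.inr ∈ chamber m ∧
      t ∘ paritySplit m hμ ∘ Sum.inl ∈
        Set.univ.pi (gap (lowerEndpoints μ (t ∘ paritySplit m hμ ∘ Sum.inr))) := by
  refine ⟨⟨fun i => ht.1 _, fun i j hij => ht.2 ?_⟩, fun i _ => ⟨?_, fun hi => ?_⟩⟩
  · rw [Fin.lt_def] at hij ⊢
    simp only [Function.comp_apply, val_paritySplit_inr]
    omega
  · rcases le_or_gt μ i with h | h
    · rw [lowerEndpoints_of_le h]
      refine ht.2 (Fin.lt_def.2 ?_)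
      simp only [Function.comp_apply, val_paritySplit_inl, val_paritySplit_inr]
      omega
    · rw [lowerEndpoints_of_lt h]
      exact ht.1 _
  · rw [lowerEndpoints_of_le (show μ ≤ (i : ℕ) + 1 by omega)]
    refine ht.2 (Fin.lt_def.2 ?_)
    simp only [Function.comp_apply, val_paritySplit_inl, val_paritySplit_inr]
    omega

theorem lt_next_of_interlace
    (hz : t ∘ paritySplit m hμ ∘ Sum.inl ∈
      Set.univ.pi (gap (lowerEndpoints μ (t ∘ paritySplit m hμ ∘ Sum.inr))))
    (k : ℕ) (hk : k + 1 < 2 * m + μ) : t ⟨k, by omega⟩ < t ⟨k + 1, hk⟩ := by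
  by_cases hkept : k % 2 = μ
  · let i : Fin (m + μ) := ⟨(k - μ) / 2 + μ, by omega⟩
    have hlower := (hz i (Set.mem_univ i)).1
    rw [lowerEndpoints_of_le (Nat.le_add_left _ _)] at hlower
    refine (congrArg t (Fin.ext ?_)).trans_lt (hlower.trans_eq (congrArg t (Fin.ext ?_))) <;>
      simp only [Function.comp_apply, val_paritySplit_inl, val_paritySplit_inr, i] <;> omega
  · let i : Fin (m + μ) := ⟨(k + μ) / 2, by omega⟩
    have hi : (i : ℕ) + 1 < m + μ := by simp only [i]; omega
    have hupper := (hz i (Set.mem_univ i)).2 hi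
    rw [lowerEndpoints_of_le (show μ ≤ (i : ℕ) + 1 by omega)] at hupper
    refine (congrArg t (Fin.ext ?_)).trans_lt (hupper.trans_eq (congrArg t (Fin.ext ?_))) <;>
      simp only [Function.comp_apply, val_paritySplit_inl, val_paritySplit_inr, i] <;> omega

theorem mem_chamber_iff_interlace :
    t ∈ chamber (2 * m + μ) ↔
      t ∘ paritySplit m hμ ∘ Sum.inr ∈ chamber m ∧
        t ∘ paritySplit m hμ ∘ Sum.inl ∈
          Set.univ.pi (gap (lowerEndpoints μ (t ∘ paritySplit m hμ ∘ Sum.inr))) := by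
  refine ⟨interlace_of_mem_chamber hμ, fun ⟨hy, hz⟩ => ⟨fun k => ?_, ?_⟩⟩
  · obtain ⟨i | i, rfl⟩ := (paritySplit m hμ).surjective k
    · exact (lowerEndpoints_nonneg hy.1 i).trans_lt (hz i (Set.mem_univ i)).1
    · exact hy.1 i
  · exact strictMono_of_lt_next (lt_next_of_interlace hμ hz)

/-- The splitting of a configuration of `2m+μ` points into integrated and kept points. -/
noncomputable def splitEquiv :
    (Fin (2 * m + μ) → ℝ) ≃ᵐ (Fin (m + μ) → ℝ) × (Fin m → ℝ) :=
  (MeasurableEquiv.piCongrLeft (fun _ => ℝ) (paritySplit m hμ)).symm.trans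
    (MeasurableEquiv.sumPiEquivProdPi fun _ => ℝ)

theorem splitEquiv_apply :
    splitEquiv hμ t = (t ∘ paritySplit m hμ ∘ Sum.inl, t ∘ paritySplit m hμ ∘ Sum.inr) := rfl

theorem measurePreserving_splitEquiv :
    MeasurePreserving (splitEquiv hμ : (Fin (2 * m + μ) → ℝ) ≃ᵐ _) volume volume :=
  (volume_measurePreserving_sumPiEquivProdPi fun _ => ℝ).comp
    (volume_measurePreserving_piCongrLeft (fun _ => ℝ) (paritySplit m hμ)).symm

theorem measurableSet_chamber_inter_kept {H : Set (Fin m → ℝ)} (hH : MeasurableSet H) :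
    MeasurableSet (chamber (2 * m + μ) ∩ {t | t ∘ paritySplit m hμ ∘ Sum.inr ∈ H}) :=
  measurableSet_chamber.inter <|
    measurableSet_preimage (measurable_snd.comp (splitEquiv hμ).measurable) hH

theorem measurableSet_pi_gap {N : ℕ} (L : Fin N → ℝ) : MeasurableSet (Set.univ.pi (gap L)) := by
  refine MeasurableSet.univ_pi fun i => ?_
  unfold gap
  measurability

theorem setIntegral_chamber_eq_setIntegral_setIntegral_pi_gap {H : Set (Fin m → ℝ)}
    (hH : MeasurableSet H) {f : (Fin (m + μ) → ℝ) → ℝ} {g : (Fin m → ℝ) → ℝ}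
    (hf : Integrable f) (hg : Integrable g) :
    ∫ t in chamber (2 * m + μ) ∩ {t | t ∘ paritySplit m hμ ∘ Sum.inr ∈ H},
        f (t ∘ paritySplit m hμ ∘ Sum.inl) * g (t ∘ paritySplit m hμ ∘ Sum.inr) =
      ∫ y in chamber m ∩ H, (∫ z in Set.univ.pi (gap (lowerEndpoints μ y)), f z) * g y := by
  let R : Set ((Fin (m + μ) → ℝ) × (Fin m → ℝ)) :=
    {p | p.2 ∈ chamber m ∩ H ∧ p.1 ∈ Set.univ.pi (gap (lowerEndpoints μ p.2))}
  have hpre : splitEquiv hμ ⁻¹' R =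
      chamber (2 * m + μ) ∩ {t | t ∘ paritySplit m hμ ∘ Sum.inr ∈ H} := by
    ext t
    simp only [R, Set.mem_preimage, Set.mem_ofPred_eq, Set.mem_inter_iff, splitEquiv_apply,
      mem_chamber_iff_interlace hμ]
    tauto
  have hR : MeasurableSet R := by
    rw [← (splitEquiv hμ).measurableSet_preimage, hpre]
    exact measurableSet_chamber_inter_kept hμ hH
  have hslice : ∀ y, ∫ z, R.indicator (fun p => f p.1 * g p.2) (z, y) =
      (chamber m ∩ H).indicator
        (fun y => (∫ z in Set.univ.pi (gap (lowerEndpoints μ y)), f z) * g y) y := fun y => by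
    by_cases hy : y ∈ chamber m ∩ H
    · rw [Set.indicator_of_mem hy, ← integral_mul_const,
        ← integral_indicator (measurableSet_pi_gap _)]
      classical
      simp only [Set.indicator_apply]
      exact integral_congr_ae <| Filter.Eventually.of_forall fun z =>
        if_congr (and_iff_right hy) rfl rfl
    · rw [Set.indicator_of_notMem hy]
      exact integral_eq_zero_of_ae <| Filter.Eventually.of_forall fun z =>
        Set.indicator_of_notMem (fun hz => hy hz.1) _
  calc _ = ∫ p in R, f p.1 * g p.2 := by
        rw [← hpre]
        exact (measurePreserving_splitEquiv hμ).setIntegral_preimage_emb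
          (splitEquiv hμ).measurableEmbedding (fun p => f p.1 * g p.2) R
    _ = ∫ y, ∫ z, R.indicator (fun p => f p.1 * g p.2) (z, y) := by
        rw [← integral_indicator hR]
        exact integral_prod_symm _ ((hf.mul_prod hg).indicator hR)
    _ = _ := by
        simp_rw [hslice]
        exact integral_indicator (measurableSet_chamber.inter hH)

theorem setIntegral_chamber_sum_oeDensity_units_smul {w : ℝ → ℝ} (hw : w.Even)
    (hint : ∀ e < 2 * m + μ, Integrable fun x => x ^ e * w x) {H : Set (Fin m → ℝ)}
    (hH : MeasurableSet H) :
    ∫ t in chamber (2 * m + μ) ∩ {t | t ∘ paritySplit m hμ ∘ Sum.inr ∈ H},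
        ∑ ε : Fin (2 * m + μ) → ℤˣ, oeDensity w (fun i => ε i • t i) =
      2 ^ (2 * m + μ) * ∫ y in chamber m ∩ H,
        alternant (fun (j : Fin (m + μ)) t => ∫ x in Set.Ioi t, x ^ (2 * j + 1 - μ : ℕ) * w x)
            (lowerEndpoints μ y) *
          alternant (fun (j : Fin m) x => x ^ (2 * j + μ : ℕ) * w x) y := by
  have hodd : ∀ j : Fin (m + μ), Integrable fun x => x ^ (2 * j + 1 - μ : ℕ) * w x :=
    fun j => hint _ (by omega)
  have heven : ∀ j : Fin m, Integrable fun x => x ^ (2 * j + μ : ℕ) * w x :=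
    fun j => hint _ (by omega)
  rw [setIntegral_congr_fun (measurableSet_chamber_inter_kept hμ hH)
      fun t ht => sum_oeDensity_units_smul hμ hw ht.1, integral_const_mul,
    setIntegral_chamber_eq_setIntegral_setIntegral_pi_gap hμ hH
      (integrable_alternant fun _ => hodd) (integrable_alternant fun _ => heven)]
  congr 1
  refine setIntegral_congr_fun (measurableSet_chamber.inter hH) fun y hy => ?_
  simp only [setIntegral_pi_gap_alternant hodd (monotone_lowerEndpoints hy.1)]

end Interlacing

section Counting

/-- The number of coordinates of `t` below `s`. -/
noncomputable def countBelow {N : ℕ} (s : ℝ) (t : Fin N → ℝ) : ℕ :=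
  (Finset.univ.filter fun i => t i < s).card

theorem lt_iff_lt_countBelow {N : ℕ} {t : Fin N → ℝ} (ht : StrictMono t) (s : ℝ) (i : Fin N) :
    t i < s ↔ (i : ℕ) < countBelow s t := by
  constructor
  · intro hi
    have hsubset : Finset.Iic i ⊆ Finset.univ.filter fun i => t i < s := fun j hj =>
      Finset.mem_filter.2
        ⟨Finset.mem_univ j, (ht.monotone (Finset.mem_Iic.1 hj)).trans_lt hi⟩
    have hcard := Finset.card_le_card hsubset
    rwa [Fin.card_Iic] at hcard
  · contrapose!
    intro hi
    have hsubset : (Finset.univ.filter fun i => t i < s) ⊆ Finset.Iio i := fun j hj =>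
      Finset.mem_Iio.2 (ht.lt_iff_lt.1 ((Finset.mem_filter.1 hj).2.trans_le hi))
    simpa only [Fin.card_Iio] using! Finset.card_le_card hsubset

theorem countBelow_paritySplit_inr {m μ : ℕ} (hμ : μ ≤ 1) {t : Fin (2 * m + μ) → ℝ}
    (ht : StrictMono t) (s : ℝ) :
    countBelow s (t ∘ paritySplit m hμ ∘ Sum.inr) = (countBelow s t + 1 - μ) / 2 := by
  have hle : countBelow s t ≤ 2 * m + μ := (Finset.card_le_univ _).trans_eq (Fintype.card_fin _)
  have hkept : ∀ i : Fin m, (t ∘ paritySplit m hμ ∘ Sum.inr) i < s ↔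
      (i : ℕ) < (countBelow s t + 1 - μ) / 2 := fun i => by
    simp only [Function.comp_apply]
    rw [lt_iff_lt_countBelow ht, val_paritySplit_inr]
    omega
  rw [countBelow, Finset.filter_congr fun i _ => hkept i, Fin.card_filter_val_lt]
  omega

theorem countBelow_comp_perm {N : ℕ} (s : ℝ) (t : Fin N → ℝ) (σ : Equiv.Perm (Fin N)) :
    countBelow s (t ∘ σ) = countBelow s t :=
  Finset.card_equiv σ fun i => by simp only [Finset.mem_filter_univ, Function.comp_apply]

theorem measurable_countBelow {N : ℕ} (s : ℝ) :
    Measurable (countBelow s : (Fin N → ℝ) → ℕ) := by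
  unfold countBelow
  simp only [Finset.card_filter]
  exact Finset.measurable_sum _ fun i _ =>
    Measurable.ite (measurableSet_lt (measurable_pi_apply i) measurable_const)
      measurable_const measurable_const

theorem measurableSet_countBelow_mem {N : ℕ} (s : ℝ) (K : Set ℕ) :
    MeasurableSet {t : Fin N → ℝ | countBelow s t ∈ K} :=
  measurable_countBelow s MeasurableSet.of_discrete

theorem measurableSet_countBelow_abs_mem {N : ℕ} (s : ℝ) (K : Set ℕ) :
    MeasurableSet {x : Fin N → ℝ | countBelow s (fun i => |x i|) ∈ K} :=
  (measurable_countBelow s).comp (by fun_prop) MeasurableSet.of_discrete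

end Counting

section EvenWeight

variable {N m μ : ℕ} {w : ℝ → ℝ}

theorem abs_units_smul_of_mem_chamber {t : Fin N → ℝ} (ht : t ∈ chamber N) (ε : Fin N → ℤˣ) :
    (fun i => |ε i • t i|) = t := funext fun i => by
  rcases Int.units_eq_one_or (ε i) with h | h <;>
    simp only [h, Units.neg_smul, one_smul, abs_neg, abs_of_pos (ht.1 i)]

theorem setIntegral_preimage_abs_eq_factorial_mul_setIntegral_chamber {F : (Fin N → ℝ) → ℝ}
    (hF : Integrable F) (hsymm : ∀ (σ : Equiv.Perm (Fin N)) x, F (x ∘ σ) = F x)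
    {E : Set (Fin N → ℝ)} (hE : MeasurableSet E)
    (hEsymm : ∀ (σ : Equiv.Perm (Fin N)) x, x ∘ σ ∈ E ↔ x ∈ E) :
    ∫ x in (fun x i => |x i|) ⁻¹' E, F x =
      N.factorial * ∫ t in chamber N ∩ E, ∑ ε : Fin N → ℤˣ, F (fun i => ε i • t i) := by
  have habsE : MeasurableSet ((fun (x : Fin N → ℝ) i => |x i|) ⁻¹' E) :=
    measurableSet_preimage (by fun_prop) hE
  rw [← integral_indicator habsE, ← setIntegral_indicator hE,
    integral_eq_factorial_mul_setIntegral_chamber (hF.indicator habsE) fun σ x => by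
      classical
      simp only [Set.indicator_apply, hsymm]
      exact if_congr (hEsymm σ fun i => |x i|) rfl rfl]
  congr 1
  refine setIntegral_congr_fun measurableSet_chamber fun t ht => ?_
  have hmem : ∀ ε : Fin N → ℤˣ, (fun i => ε i • t i) ∈ (fun x i => |x i|) ⁻¹' E ↔ t ∈ E :=
    fun ε => by rw [Set.mem_preimage, abs_units_smul_of_mem_chamber ht]
  by_cases htE : t ∈ E <;>
    simp only [Set.indicator, hmem, htE, if_true, if_false, Finset.sum_const_zero]

theorem setIntegral_oeDensity_decimation (hμ : μ ≤ 1) (hw : w.Even) (hnonneg : ∀ x, 0 ≤ w x)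
    (hint : ∀ e < 2 * m + μ, Integrable fun x => x ^ e * w x) (s : ℝ) (K : Set ℕ) :
    ∫ x in {x : Fin (2 * m + μ) → ℝ | (countBelow s (fun i => |x i|) + 1 - μ) / 2 ∈ K},
        oeDensity w x =
      (2 * m + μ).factorial * (2 ^ (2 * m + μ) *
        ∫ y in chamber m ∩ {y | countBelow s y ∈ K},
          alternant (fun (j : Fin (m + μ)) t => ∫ x in Set.Ioi t, x ^ (2 * j + 1 - μ : ℕ) * w x)
              (lowerEndpoints μ y) *
            alternant (fun (j : Fin m) x => x ^ (2 * j + μ : ℕ) * w x) y) := by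
  let E : Set (Fin (2 * m + μ) → ℝ) := {x | (countBelow s x + 1 - μ) / 2 ∈ K}
  have hE : MeasurableSet E := measurableSet_countBelow_mem s {c | (c + 1 - μ) / 2 ∈ K}
  have hkept : chamber (2 * m + μ) ∩ E = chamber (2 * m + μ) ∩
      {t | t ∘ paritySplit m hμ ∘ Sum.inr ∈ {y | countBelow s y ∈ K}} := by
    ext t
    refine and_congr_right fun ht => ?_
    simp only [E, Set.mem_ofPred_eq, countBelow_paritySplit_inr hμ ht.2]
  rw [← setIntegral_chamber_sum_oeDensity_units_smul hμ hw hint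
    (measurableSet_countBelow_mem s K), ← hkept]
  refine setIntegral_preimage_abs_eq_factorial_mul_setIntegral_chamber
    (integrable_oeDensity hnonneg hint) (fun σ x => oeDensity_comp_perm w x σ) hE fun σ x => ?_
  simp only [E, Set.mem_ofPred_eq, countBelow_comp_perm]

end EvenWeight

section Squaring

variable {N : ℕ}

theorem injOn_sq_orthant : Set.InjOn (fun (y : Fin N → ℝ) => y ^ 2) (orthant N) :=
  fun _ hy _ hz h => funext fun i =>
    (pow_left_inj₀ (hy i).le (hz i).le two_ne_zero).1 (congrFun h i)

theorem image_sq_chamber : (fun y : Fin N → ℝ => y ^ 2) '' chamber N = chamber N := by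
  refine Set.Subset.antisymm ?_ fun u hu => ⟨fun i => √(u i), ⟨fun i => Real.sqrt_pos.2 (hu.1 i),
    fun i j hij => Real.sqrt_lt_sqrt (hu.1 i).le (hu.2 hij)⟩,
    funext fun i => Real.sq_sqrt (hu.1 i).le⟩
  rintro _ ⟨y, hy, rfl⟩
  exact ⟨fun i => pow_pos (hy.1 i) 2,
    fun i j hij => pow_lt_pow_left₀ (hy.2 hij) (hy.1 i).le two_ne_zero⟩

theorem setIntegral_chamber_eq_setIntegral_comp_sq (g : (Fin N → ℝ) → ℝ) {H : Set (Fin N → ℝ)}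
    (hH : MeasurableSet H) :
    ∫ u in chamber N ∩ H, g u =
      2 ^ N * ∫ y in chamber N ∩ {y | y ^ 2 ∈ H}, (∏ i, y i) * g (y ^ 2) := by
  let D (y : Fin N → ℝ) : (Fin N → ℝ) →L[ℝ] (Fin N → ℝ) := ContinuousLinearMap.pi fun i =>
    ContinuousLinearMap.toSpanSingleton ℝ (2 * y i) ∘SL ContinuousLinearMap.proj i
  have hD : ∀ y, HasFDerivAt (fun y : Fin N → ℝ => y ^ 2) (D y) y := fun y =>
    hasFDerivAt_pi.2 fun i => by
      have hproj : HasFDerivAt (fun y : Fin N → ℝ => y i) (ContinuousLinearMap.proj i) y :=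
        hasFDerivAt_apply (𝕜 := ℝ) i y
      simpa using! (hasDerivAt_pow 2 (y i)).hasFDerivAt.comp y hproj
  have hdet : ∀ y ∈ chamber N, |(D y).det| = 2 ^ N * ∏ i, y i := fun y hy => by
    have hpos : 0 < ∏ i, 2 * y i := Finset.prod_pos fun i _ => mul_pos two_pos (hy.1 i)
    simp only [D, ContinuousLinearMap.det_pi, ContinuousLinearMap.det_toSpanSingleton]
    rw [abs_of_pos hpos, Finset.prod_mul_distrib, Finset.prod_const, Finset.card_univ,
      Fintype.card_fin]
  have himage : (fun y : Fin N → ℝ => y ^ 2) '' (chamber N ∩ {y | y ^ 2 ∈ H}) = chamber N ∩ H := by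
    rw [show {y : Fin N → ℝ | y ^ 2 ∈ H} = (fun y => y ^ 2) ⁻¹' H from rfl,
      Set.image_inter_preimage, image_sq_chamber]
  have hdomain : MeasurableSet (chamber N ∩ {y : Fin N → ℝ | y ^ 2 ∈ H}) :=
    measurableSet_chamber.inter (measurableSet_preimage (by fun_prop) hH)
  rw [← himage, integral_image_eq_integral_abs_det_fderiv_smul volume hdomain
    (fun y _ => (hD y).hasFDerivWithinAt) (injOn_sq_orthant.mono fun y hy => hy.1.1),
    ← integral_const_mul]
  refine setIntegral_congr_fun hdomain fun y hy => ?_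
  simp only [hdet y hy.1, smul_eq_mul, mul_assoc]

theorem countBelow_sq {s : ℝ} (hs : 0 ≤ s) {y : Fin N → ℝ} (hy : y ∈ orthant N) :
    countBelow (s ^ 2) (y ^ 2) = countBelow s y :=
  congrArg Finset.card <| Finset.filter_congr fun i _ =>
    pow_lt_pow_iff_left₀ (hy i).le hs two_ne_zero

theorem setIntegral_ueDensity_comp_sq {v : ℝ → ℝ}
    (hint : IntegrableOn (ueDensity v) (orthant N)) {s : ℝ} (hs : 0 ≤ s) (K : Set ℕ) :
    ∫ u in orthant N ∩ {u | countBelow (s ^ 2) u ∈ K}, ueDensity v u =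
      N.factorial * (2 ^ N * ∫ y in chamber N ∩ {y | countBelow s y ∈ K},
        (∏ i, y i) * ueDensity v (y ^ 2)) := by
  have hH : MeasurableSet {u : Fin N → ℝ | countBelow (s ^ 2) u ∈ K} :=
    measurableSet_countBelow_mem _ K
  have hdomain : chamber N ∩ {y | y ^ 2 ∈ {u | countBelow (s ^ 2) u ∈ K}} =
      chamber N ∩ {y | countBelow s y ∈ K} := by
    ext y
    refine and_congr_right fun hy => ?_
    simp only [Set.mem_ofPred_eq, countBelow_sq hs hy.1]
  rw [← hdomain, ← setIntegral_chamber_eq_setIntegral_comp_sq _ hH,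
    ← setIntegral_indicator hH, ← setIntegral_indicator hH]
  refine setIntegral_orthant_eq_factorial_mul_setIntegral_chamber
    (hint.indicator hH) fun σ u => ?_
  classical
  simp only [Set.indicator_apply, Set.mem_ofPred_eq, countBelow_comp_perm, ueDensity_comp_perm]

end Squaring

section Cauchy

/-- The unnormalized Cauchy weight `(1 + x ^ 2) ^ (-p)` on the line. -/
noncomputable def cauchyWeight (p x : ℝ) : ℝ := (1 + x ^ 2) ^ (-p)

variable {p : ℝ} {e : ℕ}

theorem cauchyWeight_pos (p x : ℝ) : 0 < cauchyWeight p x :=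
  Real.rpow_pos_of_pos (by positivity) _

theorem even_cauchyWeight (p : ℝ) : (cauchyWeight p).Even := fun x => by
  rw [cauchyWeight, neg_sq, ← cauchyWeight]

theorem continuous_cauchyWeight (p : ℝ) : Continuous (cauchyWeight p) :=
  Continuous.rpow_const (by fun_prop) fun x => Or.inl (by positivity)

theorem cauchyWeight_sub_one (p x : ℝ) :
    cauchyWeight (p - 1) x = (1 + x ^ 2) * cauchyWeight p x := by
  have hpos : 0 < 1 + x ^ 2 := by positivity
  rw [cauchyWeight, cauchyWeight, show -(p - 1) = -p + 1 by ring,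
    Real.rpow_add_one hpos.ne', mul_comm]

theorem norm_pow_mul_cauchyWeight_le (p : ℝ) (e : ℕ) (x : ℝ) :
    ‖x ^ e * cauchyWeight p x‖ ≤ cauchyWeight (p - e / 2) x := by
  have hpos : 0 < 1 + x ^ 2 := by positivity
  have habs : |x| ≤ (1 + x ^ 2) ^ (1 / 2 : ℝ) := by
    rw [← Real.sqrt_eq_rpow]
    exact Real.abs_le_sqrt (by linarith)
  calc ‖x ^ e * cauchyWeight p x‖ = |x| ^ e * cauchyWeight p x := by
        rw [norm_mul, norm_pow, Real.norm_eq_abs, Real.norm_of_nonneg (cauchyWeight_pos p x).le]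
    _ ≤ ((1 + x ^ 2) ^ (1 / 2 : ℝ)) ^ e * cauchyWeight p x := by
        gcongr
        exact (cauchyWeight_pos p x).le
    _ = cauchyWeight (p - e / 2) x := by
        rw [cauchyWeight, cauchyWeight, ← Real.rpow_mul_natCast hpos.le, ← Real.rpow_add hpos]
        ring_nf

theorem integrable_cauchyWeight (hp : 1 < 2 * p) : Integrable (cauchyWeight p) := by
  have h := integrable_rpow_neg_one_add_norm_sq (E := ℝ) (μ := volume) (r := 2 * p) (by simpa)
  refine h.congr (Filter.Eventually.of_forall fun x => ?_)
  simp only [cauchyWeight, Real.norm_eq_abs, sq_abs]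
  ring_nf

theorem integrable_pow_mul_cauchyWeight (he : e + 1 < 2 * p) :
    Integrable fun x => x ^ e * cauchyWeight p x :=
  (integrable_cauchyWeight (p := p - e / 2) (by linarith)).mono'
    ((by fun_prop : Continuous fun x : ℝ => x ^ e).mul
      (continuous_cauchyWeight p)).aestronglyMeasurable
    (Filter.Eventually.of_forall (norm_pow_mul_cauchyWeight_le p e))

theorem tendsto_pow_mul_cauchyWeight_atTop (he : e < 2 * p) :
    Filter.Tendsto (fun x => x ^ e * cauchyWeight p x) Filter.atTop (nhds 0) := by
  have hatTop : Filter.Tendsto (fun x : ℝ => 1 + x ^ 2) Filter.atTop Filter.atTop :=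
    Filter.tendsto_atTop_add_const_left _ _ (Filter.tendsto_pow_atTop two_ne_zero)
  exact squeeze_zero_norm (norm_pow_mul_cauchyWeight_le p e)
    ((tendsto_rpow_neg_atTop (by linarith)).comp hatTop)

theorem hasDerivAt_pow_mul_cauchyWeight (p : ℝ) (e : ℕ) (x : ℝ) :
    HasDerivAt (fun x => x ^ e * cauchyWeight (p - 1) x)
      (e * (x ^ (e - 1) * cauchyWeight p x) +
        (e - 2 * (p - 1)) * (x ^ (e + 1) * cauchyWeight p x)) x := by
  have hbase : HasDerivAt (fun x : ℝ => 1 + x ^ 2) (2 * x) x := by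
    simpa using (hasDerivAt_pow 2 x).const_add 1
  have hweight : HasDerivAt (cauchyWeight (p - 1)) (-(2 * (p - 1)) * x * cauchyWeight p x) x := by
    convert! hbase.rpow_const (p := -(p - 1)) (Or.inl (by positivity)) using 1
    rw [cauchyWeight, show -(p - 1) - 1 = -p by ring]
    ring
  convert! (hasDerivAt_pow e x).mul hweight using 1
  rw [cauchyWeight_sub_one]
  cases e with
  | zero =>
    simp only [Nat.cast_zero, pow_zero]
    ring
  | succ e => simp only [Nat.add_sub_cancel]; ring

/-- The tail integrals of the moments of the Cauchy weight, which arise when points are integrated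
out over the gaps. -/
noncomputable def cauchyTail (p : ℝ) (e : ℕ) (t : ℝ) : ℝ :=
  ∫ x in Set.Ioi t, x ^ e * cauchyWeight p x

theorem cauchyTail_recurrence (he : e + 2 < 2 * p) (t : ℝ) :
    e * cauchyTail p (e - 1) t + (e - 2 * (p - 1)) * cauchyTail p (e + 1) t =
      -(t ^ e * cauchyWeight (p - 1) t) := by
  have hpred : ((e - 1 : ℕ) : ℝ) ≤ e := Nat.cast_le.2 (Nat.sub_le e 1)
  have hlow : IntegrableOn (fun x => x ^ (e - 1) * cauchyWeight p x) (Set.Ioi t) :=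
    (integrable_pow_mul_cauchyWeight (by linarith)).integrableOn
  have hhigh : IntegrableOn (fun x => x ^ (e + 1) * cauchyWeight p x) (Set.Ioi t) :=
    (integrable_pow_mul_cauchyWeight (by push_cast; linarith)).integrableOn
  have hftc := integral_Ioi_of_hasDerivAt_of_tendsto' (a := t)
    (fun x _ => hasDerivAt_pow_mul_cauchyWeight p e x)
    ((hlow.const_mul (e : ℝ)).add (hhigh.const_mul (e - 2 * (p - 1))))
    (tendsto_pow_mul_cauchyWeight_atTop (by linarith))
  rwa [integral_add (hlow.const_mul _) (hhigh.const_mul _), integral_const_mul,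
    integral_const_mul, zero_sub] at hftc

theorem cauchyTail_succ_mem {S : Submodule ℝ (ℝ → ℝ)} (he : e + 2 < 2 * p)
    (hlow : e = 0 ∨ cauchyTail p (e - 1) ∈ S)
    (hboundary : (fun x => x ^ e * cauchyWeight (p - 1) x) ∈ S) : cauchyTail p (e + 1) ∈ S := by
  have hlead : e - 2 * (p - 1) ≠ 0 := by linarith
  have hsolve : cauchyTail p (e + 1) = (e - 2 * (p - 1))⁻¹ •
      (-(fun x => x ^ e * cauchyWeight (p - 1) x) - (e : ℝ) • cauchyTail p (e - 1)) := by
    ext t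
    simp only [Pi.smul_apply, Pi.sub_apply, Pi.neg_apply, smul_eq_mul]
    rw [eq_inv_mul_iff_mul_eq₀ hlead]
    linarith [cauchyTail_recurrence he t]
  rw [hsolve]
  refine S.smul_mem _ (S.sub_mem (S.neg_mem hboundary) ?_)
  rcases hlow with rfl | hlow
  · rw [Nat.cast_zero, zero_smul]
    exact S.zero_mem
  · exact S.smul_mem _ hlow

theorem cauchyTail_mem {m μ : ℕ} (hμ : μ ≤ 1) (hp : 2 * m + μ < 2 * p)
    {S : Submodule ℝ (ℝ → ℝ)} (hzero : μ = 1 → cauchyTail p 0 ∈ S)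
    (hgen : ∀ q < m, (fun x => x ^ (2 * q + μ) * cauchyWeight (p - 1) x) ∈ S) :
    ∀ j < m + μ, cauchyTail p (2 * j + 1 - μ) ∈ S := by
  have hstep : ∀ q < m, (2 * q + μ = 0 ∨ cauchyTail p (2 * q + μ - 1) ∈ S) →
      cauchyTail p (2 * q + μ + 1) ∈ S := fun q hq hlow => by
    have hcast : (q : ℝ) + 1 ≤ m := by exact_mod_cast hq
    exact cauchyTail_succ_mem (by push_cast; linarith) hlow (hgen q hq)
  intro j
  induction j with
  | zero =>
    intro hj
    interval_cases μ
    · exact hstep 0 (by omega) (Or.inl rfl)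
    · exact hzero rfl
  | succ j ih =>
    intro hj
    have hprev : 2 * (j + 1 - μ) + μ - 1 = 2 * j + 1 - μ := by omega
    have hnext : 2 * (j + 1 - μ) + μ + 1 = 2 * (j + 1) + 1 - μ := by omega
    exact hnext ▸ hstep (j + 1 - μ) (by omega) (Or.inr (hprev ▸ ih (by omega)))

theorem exists_alternant_cauchyTail_eq_mul {m μ : ℕ} (hμ : μ ≤ 1) (hp : 2 * m + μ < 2 * p) :
    ∃ C : ℝ, ∀ y : Fin m → ℝ,
      alternant (fun (j : Fin (m + μ)) => cauchyTail p (2 * j + 1 - μ)) (lowerEndpoints μ y) =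
        C * alternant (fun (j : Fin m) x => x ^ (2 * j + μ : ℕ) * cauchyWeight (p - 1) x) y := by
  rcases Nat.le_one_iff_eq_zero_or_eq_one.1 hμ with rfl | rfl
  · let φ (j : Fin m) (x : ℝ) : ℝ := x ^ (2 * j + 0 : ℕ) * cauchyWeight (p - 1) x
    have hspan : ∀ j : Fin m, cauchyTail p (2 * j + 1 - 0) ∈ Submodule.span ℝ (Set.range φ) :=
      fun j => cauchyTail_mem hμ hp (absurd · zero_ne_one)
        (fun q hq => Submodule.subset_span (Set.mem_range_self (f := φ) ⟨q, hq⟩)) j j.2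
    simpa only [lowerEndpoints_zero] using! exists_alternant_eq_mul_of_mem_span hspan
  · let φ (j : Fin m) (x : ℝ) : ℝ := x ^ (2 * j + 1 : ℕ) * cauchyWeight (p - 1) x
    let ψ : Fin (m + 1) → ℝ → ℝ := Fin.cons (cauchyTail p 0) φ
    have hspan : ∀ j : Fin (m + 1),
        cauchyTail p (2 * j + 1 - 1) ∈ Submodule.span ℝ (Set.range ψ) :=
      fun j => cauchyTail_mem hμ hp
        (fun _ => Submodule.subset_span (Set.mem_range_self (f := ψ) 0))
        (fun q hq => Submodule.subset_span (Set.mem_range_self (f := ψ) (Fin.succ ⟨q, hq⟩))) j j.2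
    have hvanish : ∀ j, φ j 0 = 0 := fun j => by
      simp only [φ, pow_succ, mul_zero, zero_mul]
    obtain ⟨C, hC⟩ := exists_alternant_eq_mul_of_mem_span hspan
    refine ⟨C * cauchyTail p 0 0, fun y => ?_⟩
    rw [lowerEndpoints_one, hC, alternant_cons_of_eq_zero hvanish, mul_assoc]

end Cauchy

section Duality

/-- The unnormalized beta prime weight `u ^ b * (1 + u) ^ (-q)` on the positive half-line. -/
noncomputable def betaPrimeWeight (b q u : ℝ) : ℝ := u ^ b * (1 + u) ^ (-q)

variable {m μ : ℕ} {p : ℝ}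

theorem betaPrimeWeight_nonneg (b q : ℝ) {u : ℝ} (hu : 0 < u) : 0 ≤ betaPrimeWeight b q u :=
  mul_nonneg (Real.rpow_nonneg hu.le _) (Real.rpow_nonneg (by positivity) _)

theorem cauchyWeight_mul_cauchyWeight (p q x : ℝ) :
    cauchyWeight p x * cauchyWeight q x = cauchyWeight (p + q) x := by
  rw [cauchyWeight, cauchyWeight, cauchyWeight, ← Real.rpow_add (by positivity), neg_add]

theorem mul_betaPrimeWeight_sq (μ : ℕ) (q : ℝ) {y : ℝ} (hy : 0 < y) :
    y * betaPrimeWeight (μ - 1 / 2) q (y ^ 2) = y ^ (2 * μ) * cauchyWeight q y := by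
  have hpow : y * (y ^ 2) ^ ((μ : ℝ) - 1 / 2) = y ^ (2 * μ) := by
    calc y * (y ^ 2) ^ ((μ : ℝ) - 1 / 2)
        = y ^ (1 : ℝ) * y ^ ((2 : ℕ) * ((μ : ℝ) - 1 / 2)) := by
          rw [Real.rpow_natCast_mul hy.le, Real.rpow_one]
      _ = y ^ ((2 * μ : ℕ) : ℝ) := by
          rw [← Real.rpow_add hy]
          push_cast
          ring_nf
      _ = y ^ (2 * μ) := Real.rpow_natCast y (2 * μ)
  rw [betaPrimeWeight, ← mul_assoc, hpow, cauchyWeight]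

theorem integrableOn_pow_mul_betaPrimeWeight (hp : 2 * m + μ < 2 * p) {e : ℕ}
    (he : e + 2 ≤ 2 * m) :
    IntegrableOn (fun u => u ^ e * betaPrimeWeight (μ - 1 / 2) (2 * p - 1) u) (Set.Ioi 0) := by
  have he' : (e : ℝ) + 2 ≤ 2 * m := by exact_mod_cast he
  have hmoment : Integrable fun y : ℝ => y ^ (2 * e + 2 * μ) * cauchyWeight (2 * p - 1) y :=
    integrable_pow_mul_cauchyWeight (by push_cast; linarith)
  rw [← integrableOn_Ioi_comp_rpow_iff' _ two_ne_zero]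
  refine hmoment.integrableOn.congr_fun (fun y hy => ?_) measurableSet_Ioi
  have hone : (2 : ℝ) - 1 = 1 := by norm_num
  simp only [hone, Real.rpow_one, Real.rpow_two, smul_eq_mul]
  linear_combination -(y ^ 2) ^ e * mul_betaPrimeWeight_sq μ (2 * p - 1) hy

theorem alternant_mul_alternant_eq_mul_ueDensity (p : ℝ) (μ : ℕ) {y : Fin m → ℝ}
    (hy : y ∈ orthant m) :
    alternant (fun (j : Fin m) x => x ^ (2 * j + μ : ℕ) * cauchyWeight (p - 1) x) y *
        alternant (fun (j : Fin m) x => x ^ (2 * j + μ : ℕ) * cauchyWeight p x) y =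
      (∏ i, y i) * ueDensity (betaPrimeWeight (μ - 1 / 2) (2 * p - 1)) (y ^ 2) := by
  have hsq (w : ℝ → ℝ) : alternant (fun (j : Fin m) x => x ^ (2 * j + μ : ℕ) * w x) y =
      (∏ i, y i ^ μ * w (y i)) * (Matrix.vandermonde (y ^ 2)).det := by
    simp only [pow_add, pow_mul, mul_assoc]
    exact alternant_pow_mul (fun x => x ^ 2) (fun x => x ^ μ * w x) y
  have hweight : (∏ i, y i) * ∏ i, betaPrimeWeight (μ - 1 / 2) (2 * p - 1) ((y ^ 2) i) =
      (∏ i, y i ^ μ * cauchyWeight (p - 1) (y i)) * ∏ i, y i ^ μ * cauchyWeight p (y i) := by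
    rw [← Finset.prod_mul_distrib, ← Finset.prod_mul_distrib]
    refine Finset.prod_congr rfl fun i _ => ?_
    rw [mul_mul_mul_comm, cauchyWeight_mul_cauchyWeight, ← pow_add, ← two_mul, Pi.pow_apply,
      mul_betaPrimeWeight_sq μ _ (hy i), sub_add_eq_add_sub, ← two_mul]
  rw [hsq, hsq, ueDensity]
  linear_combination -(Matrix.vandermonde (y ^ 2)).det ^ 2 * hweight

theorem exists_setIntegral_oeDensity_eq_mul_setIntegral_ueDensity (hμ : μ ≤ 1)
    (hp : 2 * m + μ < 2 * p) :
    ∃ C : ℝ, ∀ s, 0 ≤ s → ∀ K : Set ℕ,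
      ∫ x in {x : Fin (2 * m + μ) → ℝ | (countBelow s (fun i => |x i|) + 1 - μ) / 2 ∈ K},
          oeDensity (cauchyWeight p) x =
        C * ∫ u in orthant m ∩ {u | countBelow (s ^ 2) u ∈ K},
          ueDensity (betaPrimeWeight (μ - 1 / 2) (2 * p - 1)) u := by
  obtain ⟨C, hC⟩ := exists_alternant_cauchyTail_eq_mul hμ hp
  refine ⟨(2 * m + μ).factorial * 2 ^ (2 * m + μ) * C / (m.factorial * 2 ^ m),
    fun s hs K => ?_⟩
  have hmoment : ∀ e < 2 * m + μ, Integrable fun x => x ^ e * cauchyWeight p x := fun e he =>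
    integrable_pow_mul_cauchyWeight (lt_of_le_of_lt (by exact_mod_cast he) hp)
  have hdomain : MeasurableSet (chamber m ∩ {y | countBelow s y ∈ K}) :=
    measurableSet_chamber.inter (measurableSet_countBelow_mem s K)
  rw [setIntegral_oeDensity_decimation hμ (even_cauchyWeight p)
      (fun x => (cauchyWeight_pos p x).le) hmoment,
    setIntegral_ueDensity_comp_sq
      (integrableOn_ueDensity fun e he => integrableOn_pow_mul_betaPrimeWeight hp he) hs,
    setIntegral_congr_fun hdomain (g := fun y => C * ((∏ i, y i) *
      ueDensity (betaPrimeWeight (μ - 1 / 2) (2 * p - 1)) (y ^ 2))) fun y hy => ?_,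
    integral_const_mul]
  · have hfactorial : (m.factorial : ℝ) ≠ 0 := Nat.cast_ne_zero.2 m.factorial_ne_zero
    field_simp
  · simp only [← alternant_mul_alternant_eq_mul_ueDensity p μ hy.1.1, ← mul_assoc]
    exact congrArg (· * _) (hC y)

end Duality

section Assembly

variable {m μ n : ℕ} {a : ℝ}

theorem coeTotalIntegrand_eq_oeDensity (n : ℕ) (a : ℝ) :
    coeTotalIntegrand n a = oeDensity (cauchyWeight ((n + a + 1) / 2)) :=
  funext fun x => by
    rw [coeTotalIntegrand, prod_prod_Iio_abs_sub_eq_abs_det_vandermonde]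
    rfl

theorem cueTotalIntegrand_eq_ueDensity (m μ n : ℕ) (a : ℝ) :
    cueTotalIntegrand m μ n a = ueDensity (betaPrimeWeight (μ - 1 / 2) (n + a)) :=
  funext fun y => by
    rw [cueTotalIntegrand, prod_prod_Iio_sub_sq_eq_det_vandermonde_sq]
    rfl

theorem coeGapIntegrand_eq_indicator (n : ℕ) (a s : ℝ) (j : ℤ) :
    coeGapIntegrand n a s j =
      {x | (countBelow s (fun i => |x i|) : ℤ) = j}.indicator (coeTotalIntegrand n a) := by
  classical
  ext x
  simp only [coeGapIntegrand, Set.indicator_apply, Set.mem_ofPred_eq, countBelow,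
    coeTotalIntegrand]

theorem cueGapIntegrand_eq_indicator (m μ n : ℕ) (a c : ℝ) (k : ℕ) :
    cueGapIntegrand m μ n a c k =
      {y | countBelow c y ∈ ({k} : Set ℕ)}.indicator (cueTotalIntegrand m μ n a) := by
  classical
  ext y
  simp only [cueGapIntegrand, Set.indicator_apply, Set.mem_ofPred_eq, Set.mem_singleton_iff,
    countBelow, cueTotalIntegrand]

theorem integrable_coeTotalIntegrand (ha : -1 < a) : Integrable (coeTotalIntegrand n a) := by
  rw [coeTotalIntegrand_eq_oeDensity]
  refine integrable_oeDensity (fun x => (cauchyWeight_pos _ x).le) fun e he =>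
    integrable_pow_mul_cauchyWeight ?_
  have hcast : (e : ℝ) + 1 ≤ n := by exact_mod_cast he
  linarith

theorem integral_coeTotalIntegrand_pos (ha : -1 < a) : 0 < ∫ x, coeTotalIntegrand n a x := by
  have hint : Integrable (coeTotalIntegrand n a) := integrable_coeTotalIntegrand ha
  rw [coeTotalIntegrand_eq_oeDensity] at hint ⊢
  exact integral_oeDensity_pos (cauchyWeight_pos _) (continuous_cauchyWeight _) hint

theorem integrable_coeGapIntegrand (ha : -1 < a) (s : ℝ) (j : ℤ) :
    Integrable (coeGapIntegrand n a s j) := by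
  rw [coeGapIntegrand_eq_indicator]
  exact (integrable_coeTotalIntegrand ha).indicator
    (measurableSet_countBelow_abs_mem s {c : ℕ | (c : ℤ) = j})

theorem integral_coeGapIntegrand_add (hμ : μ ≤ 1) (ha : -1 < a) (s : ℝ) (k : ℕ) :
    (∫ x, coeGapIntegrand n a s (2 * (k : ℤ) + (μ : ℤ) - 1) x) +
        ∫ x, coeGapIntegrand n a s (2 * (k : ℤ) + (μ : ℤ)) x =
      ∫ x in {x | (countBelow s (fun i => |x i|) + 1 - μ) / 2 ∈ ({k} : Set ℕ)},
        coeTotalIntegrand n a x := by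
  classical
  have hregion : MeasurableSet
      {x : Fin n → ℝ | (countBelow s (fun i => |x i|) + 1 - μ) / 2 ∈ ({k} : Set ℕ)} :=
    measurableSet_countBelow_abs_mem s {c | (c + 1 - μ) / 2 ∈ ({k} : Set ℕ)}
  rw [← integral_add (integrable_coeGapIntegrand ha s _) (integrable_coeGapIntegrand ha s _),
    ← integral_indicator hregion]
  refine integral_congr_ae (Filter.Eventually.of_forall fun x => ?_)
  simp only [coeGapIntegrand_eq_indicator, Set.indicator_apply, Set.mem_ofPred_eq,
    Set.mem_singleton_iff]
  split_ifs <;> first | omega | simp only [add_zero, zero_add]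

theorem integrableOn_cueTotalIntegrand (ha : -1 < a) :
    IntegrableOn (cueTotalIntegrand m μ (2 * m + μ) a) (orthant m) := by
  have hq : ((2 * m + μ : ℕ) : ℝ) + a = 2 * (((2 * m + μ : ℕ) + a + 1) / 2) - 1 := by ring
  rw [cueTotalIntegrand_eq_ueDensity, hq]
  exact integrableOn_ueDensity fun e he =>
    integrableOn_pow_mul_betaPrimeWeight (by push_cast; linarith) he

theorem integrableOn_cueGapIntegrand (ha : -1 < a) (c : ℝ) (k : ℕ) :
    IntegrableOn (cueGapIntegrand m μ (2 * m + μ) a c k) (orthant m) := by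
  rw [cueGapIntegrand_eq_indicator]
  exact (integrableOn_cueTotalIntegrand ha).indicator (measurableSet_countBelow_mem c {k})

theorem setIntegral_cueGapIntegrand (m μ n : ℕ) (a c : ℝ) (k : ℕ) :
    ∫ y in orthant m, cueGapIntegrand m μ n a c k y =
      ∫ y in orthant m ∩ {y | countBelow c y ∈ ({k} : Set ℕ)}, cueTotalIntegrand m μ n a y := by
  rw [cueGapIntegrand_eq_indicator, setIntegral_indicator (measurableSet_countBelow_mem c {k})]

theorem exists_setIntegral_coeTotalIntegrand_eq_mul (hμ : μ ≤ 1) (ha : -1 < a) :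
    ∃ C : ℝ, ∀ s, 0 ≤ s → ∀ K : Set ℕ,
      ∫ x in {x | (countBelow s (fun i => |x i|) + 1 - μ) / 2 ∈ K},
          coeTotalIntegrand (2 * m + μ) a x =
        C * ∫ y in orthant m ∩ {y | countBelow (s ^ 2) y ∈ K},
          cueTotalIntegrand m μ (2 * m + μ) a y := by
  simp only [coeTotalIntegrand_eq_oeDensity, cueTotalIntegrand_eq_ueDensity]
  have hp : 2 * m + μ < 2 * ((((2 * m + μ : ℕ) : ℝ) + a + 1) / 2) := by push_cast; linarith
  have hq : 2 * ((((2 * m + μ : ℕ) : ℝ) + a + 1) / 2) - 1 = (2 * m + μ : ℕ) + a := by ring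
  simpa only [hq] using
    exists_setIntegral_oeDensity_eq_mul_setIntegral_ueDensity hμ hp

theorem setIntegral_cueTotalIntegrand_nonneg (m μ n : ℕ) (a : ℝ) :
    0 ≤ ∫ y in orthant m, cueTotalIntegrand m μ n a y := by
  rw [cueTotalIntegrand_eq_ueDensity]
  exact setIntegral_ueDensity_nonneg fun u hu => betaPrimeWeight_nonneg _ _ hu

end Assembly

/-- Cauchy case of Theorem 6.1: the gap probabilities of the `n × n`
Cauchy OE and of the transformed `m × m` Cauchy UE on `(0,∞)` satisfy
`(A_{2k+μ-1} + A_{2k+μ})/Z₁ = B_k/Z₂`; all the integrals are finite and `Z₁, Z₂ > 0`. -/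
theorem cauchy_gap_probability (a : ℝ) (ha : -1 < a) (μ m n : ℕ) (hμ : μ = 0 ∨ μ = 1)
    (hm : 1 ≤ m) (hn : n = 2 * m + μ) (k : ℕ) (s : ℝ) (hs : 0 < s) :
    (∀ j : ℤ, Integrable (coeGapIntegrand n a s j)) ∧
    Integrable (coeTotalIntegrand n a) ∧
    IntegrableOn (cueGapIntegrand m μ n a (s ^ 2) k) {y : Fin m → ℝ | ∀ i, 0 < y i} ∧
    IntegrableOn (cueTotalIntegrand m μ n a) {y : Fin m → ℝ | ∀ i, 0 < y i} ∧
    (0 < ∫ x, coeTotalIntegrand n a x) ∧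
    (0 < ∫ y in {y : Fin m → ℝ | ∀ i, 0 < y i}, cueTotalIntegrand m μ n a y) ∧
    ((∫ x, coeGapIntegrand n a s (2 * (k : ℤ) + (μ : ℤ) - 1) x) +
        ∫ x, coeGapIntegrand n a s (2 * (k : ℤ) + (μ : ℤ)) x) /
      (∫ x, coeTotalIntegrand n a x) =
    (∫ y in {y : Fin m → ℝ | ∀ i, 0 < y i}, cueGapIntegrand m μ n a (s ^ 2) k y) /
      (∫ y in {y : Fin m → ℝ | ∀ i, 0 < y i}, cueTotalIntegrand m μ n a y) := by
  obtain rfl := hn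
  have hμ' : μ ≤ 1 := Nat.le_one_iff_eq_zero_or_eq_one.2 hμ
  obtain ⟨C, hC⟩ := exists_setIntegral_coeTotalIntegrand_eq_mul (m := m) hμ' ha
  have hZ₁ : 0 < ∫ x, coeTotalIntegrand (2 * m + μ) a x := integral_coeTotalIntegrand_pos ha
  have hZ : ∫ x, coeTotalIntegrand (2 * m + μ) a x =
      C * ∫ y in orthant m, cueTotalIntegrand m μ (2 * m + μ) a y := by
    simpa only [Set.mem_univ, Set.ofPred_true, Set.inter_univ, setIntegral_univ]
      using hC s hs.le Set.univ
  have hCZ₂ : C ≠ 0 ∧ ∫ y in orthant m, cueTotalIntegrand m μ (2 * m + μ) a y ≠ 0 :=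
    mul_ne_zero_iff.1 (hZ ▸ hZ₁.ne')
  refine ⟨integrable_coeGapIntegrand ha s, integrable_coeTotalIntegrand ha,
    integrableOn_cueGapIntegrand ha _ k, integrableOn_cueTotalIntegrand ha, hZ₁,
    (setIntegral_cueTotalIntegrand_nonneg ..).lt_of_ne' hCZ₂.2, ?_⟩
  rw [integral_coeGapIntegrand_add hμ' ha, hC s hs.le, hZ]
  exact (mul_div_mul_left _ _ hCZ₂.1).trans
    (congrArg (· / _) (setIntegral_cueGapIntegrand m μ _ a _ k).symm)
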